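/- arXiv:math/0411182 — 6 statements merged into one kernel-verified Lean document; each statement's English description precedes it below -/
import Mathlib

section
/- Let λ ∈ Δ ∩ P(R∨) and let p ∈ 𝒫 be a billiard path of Δ-length λ, i.e. p is linear with derivative ν_i ∈ Wλ on [a_{i−1}, a_i] for some real numbers 0 = a₀ < a₁ < … < a_r = 1 and vectors ν₁, …, ν_r in the W-orbit of λ. Then p is an LS path if and only if at each break point x_i = p(a_i) (0 < i < r) there exists a chain (η₀, …, η_s) of nonzero vectors with η₀ a positive multiple of ν_i and η_s a positive multiple of ν_{i+1}, together with positive roots β₁, …, β_s ∈ R⁺ satisfying β_j(x_i) ∈ ℤ, τ_{β_j}(η_{j−1}) = η_j, β_j(η_{j−1}) < 0 and dist_W(η_{j−1}, η_j) = 1 for every j (i.e. p is a Hecke path satisfying the maximal chain condition at each break point, the chain lying in the stabilizer of x_i in the affine Weyl group and being maximal as a W-chain). -/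
noncomputable section

/-- A finite, reduced, crystallographic root system `R` on the dual of a Euclidean
vector space `V`, together with a fixed choice of positive and simple roots.
Each root `α ∈ R` is a linear functional on `V`, with coroot `α∨ ∈ V` satisfying
`α(α∨) = 2`; `β ∘ τ_α = β - β(α∨) • α` is again a root for all roots `α, β`, and
`α(β∨) ∈ ℤ` for all roots `α, β`. -/
structure CRS (V : Type*) [NormedAddCommGroup V] [InnerProductSpace ℝ V]
    [FiniteDimensional ℝ V] where
  /-- the finite set of roots, viewed as linear functionals on `V` -/
  R : Finset (V →ₗ[ℝ] ℝ)
  zero_notMem : (0 : V →ₗ[ℝ] ℝ) ∉ R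
  /-- the coroot `α∨ ∈ V` of a root `α` -/
  coroot : (V →ₗ[ℝ] ℝ) → V
  pairing_self : ∀ α ∈ R, α (coroot α) = 2
  neg_mem : ∀ α ∈ R, -α ∈ R
  reduced : ∀ α ∈ R, ∀ c : ℝ, c • α ∈ R → c = 1 ∨ c = -1
  /-- stability of `R` under the reflections: `β ∘ τ_α = β - β(α∨) • α ∈ R` -/
  reflect_mem : ∀ α ∈ R, ∀ β ∈ R, β - β (coroot α) • α ∈ R
  /-- the crystallographic condition `α(β∨) ∈ ℤ` -/
  crystal : ∀ α ∈ R, ∀ β ∈ R, ∃ n : ℤ, α (coroot β) = (n : ℝ)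
  /-- the positive roots `R⁺` -/
  Rpos : Finset (V →ₗ[ℝ] ℝ)
  Rpos_subset : Rpos ⊆ R
  pos_iff : ∀ α ∈ R, (α ∈ Rpos ↔ -α ∉ Rpos)
  /-- the simple roots `Φ` -/
  simple : Finset (V →ₗ[ℝ] ℝ)
  simple_subset : simple ⊆ Rpos
  /-- every positive root is a nonnegative combination of the simple roots -/
  simple_combo : ∀ α ∈ Rpos, ∃ c : (V →ₗ[ℝ] ℝ) → ℝ,
    (∀ β, 0 ≤ c β) ∧ α = ∑ β ∈ simple, c β • β

namespace CRS

variable {V : Type*} [NormedAddCommGroup V] [InnerProductSpace ℝ V]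
  [FiniteDimensional ℝ V] (P : CRS V)

/-- The reflection `τ_α : x ↦ x − α(x) • α∨`. -/
def refl (α : V →ₗ[ℝ] ℝ) : V → V := fun x => x - α x • P.coroot α

/-- The closed positive Weyl chamber `Δ = {x ∈ V : α(x) ≥ 0 for all α ∈ R⁺}`. -/
def chamber : Set V := {x : V | ∀ α ∈ P.Rpos, 0 ≤ α x}

/-- `w : V → V` is an element of the Weyl group `W` (a composition of reflections
in roots of `R`). -/
def IsWeyl (w : V → V) : Prop :=
  ∃ l : List (V →ₗ[ℝ] ℝ), (∀ γ ∈ l, γ ∈ P.R) ∧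
    w = l.foldr (fun γ f => P.refl γ ∘ f) id

/-- `u` lies in the `W`-orbit of `v`. -/
def SameOrbit (v u : V) : Prop := ∃ w : V → V, P.IsWeyl w ∧ w v = u

/-- `μ ∼_W ν` : `μ` and `ν` lie in a common closed Weyl chamber of `W`. -/
def SameChamber (μ ν : V) : Prop :=
  ∃ w : V → V, P.IsWeyl w ∧ w μ ∈ P.chamber ∧ w ν ∈ P.chamber

/-- `(η 0, …, η m)` is a `W`-chain realized by the positive roots `β 0, …, β (m-1)`:
all `η i` are nonzero, `η (i+1) = τ_{β i} (η i)` and `β i (η i) < 0`. -/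
def IsChain (m : ℕ) (η : ℕ → V) (β : ℕ → (V →ₗ[ℝ] ℝ)) : Prop :=
  (∀ i ≤ m, η i ≠ 0) ∧
  ∀ i < m, β i ∈ P.Rpos ∧ η (i + 1) = P.refl (β i) (η i) ∧ β i (η i) < 0

/-- `ν ≥ μ` : there exists a `W`-chain from `ν` to `μ` (length 0 allowed). -/
def ChainGE (ν μ : V) : Prop :=
  ∃ (m : ℕ) (η : ℕ → V) (β : ℕ → (V →ₗ[ℝ] ℝ)),
    P.IsChain m η β ∧ η 0 = ν ∧ η m = μ

/-- `ν > μ`. -/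
def ChainGT (ν μ : V) : Prop := P.ChainGE ν μ ∧ ν ≠ μ

/-- The set of lengths of `W`-chains from `ν` to `μ`. -/
def chainLengths (ν μ : V) : Set ℕ :=
  {m | ∃ (η : ℕ → V) (β : ℕ → (V →ₗ[ℝ] ℝ)), P.IsChain m η β ∧ η 0 = ν ∧ η m = μ}

/-- `dist_W(ν, μ) = d` : `d` is the maximal length of a `W`-chain from `ν` to `μ`. -/
def DistW (ν μ : V) (d : ℕ) : Prop := IsGreatest (P.chainLengths ν μ) d

/-- An `a`-chain for `(ν, μ)` (Littelmann): a `W`-chain from `ν` to `μ` such that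
`β i (a • η i) ∈ ℤ` and `dist_W (η i, η (i+1)) = 1` for every step. -/
def AChainFor (a : ℝ) (ν μ : V) : Prop :=
  ∃ (m : ℕ) (η : ℕ → V) (β : ℕ → (V →ₗ[ℝ] ℝ)),
    P.IsChain m η β ∧ η 0 = ν ∧ η m = μ ∧
    (∀ i < m, ∃ n : ℤ, β i (a • η i) = (n : ℝ)) ∧
    (∀ i < m, P.DistW (η i) (η (i + 1)) 1)

/-- `w` belongs to the subgroup `W′ ≤ W` generated by the reflections in `Φ' ⊆ Φ`. -/
def IsWeylSub (Φ' : Finset (V →ₗ[ℝ] ℝ)) (w : V → V) : Prop :=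
  ∃ l : List (V →ₗ[ℝ] ℝ), (∀ γ ∈ l, γ ∈ Φ') ∧
    w = l.foldr (fun γ f => P.refl γ ∘ f) id

/-- A `W′`-chain: a `W`-chain all of whose reflections `τ_{β i}` lie in `W′`. -/
def IsChainSub (Φ' : Finset (V →ₗ[ℝ] ℝ)) (m : ℕ) (η : ℕ → V)
    (β : ℕ → (V →ₗ[ℝ] ℝ)) : Prop :=
  (∀ i ≤ m, η i ≠ 0) ∧
  ∀ i < m, β i ∈ P.Rpos ∧ P.IsWeylSub Φ' (P.refl (β i)) ∧
    η (i + 1) = P.refl (β i) (η i) ∧ β i (η i) < 0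

/-- `ν ≥_{W′} μ` : there exists a `W′`-chain from `ν` to `μ` (length 0 allowed). -/
def ChainGESub (Φ' : Finset (V →ₗ[ℝ] ℝ)) (ν μ : V) : Prop :=
  ∃ (m : ℕ) (η : ℕ → V) (β : ℕ → (V →ₗ[ℝ] ℝ)),
    P.IsChainSub Φ' m η β ∧ η 0 = ν ∧ η m = μ

/-- `ν ≳_{W′} μ` : there exists `b ≠ 0` with `ν ≥_{W′} b` and `b ∼_W μ`. -/
def Gtrsim (Φ' : Finset (V →ₗ[ℝ] ℝ)) (ν μ : V) : Prop :=
  ∃ b : V, b ≠ 0 ∧ P.ChainGESub Φ' ν b ∧ P.SameChamber b μ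

/-- A chain relative to the stabilizer `W_x` of `x` in the affine Weyl group:
all reflecting roots satisfy `β i (x) ∈ ℤ`. -/
def IsChainAt (x : V) (m : ℕ) (η : ℕ → V) (β : ℕ → (V →ₗ[ℝ] ℝ)) : Prop :=
  (∀ i ≤ m, η i ≠ 0) ∧
  ∀ i < m, β i ∈ P.Rpos ∧ (∃ n : ℤ, β i x = (n : ℝ)) ∧
    η (i + 1) = P.refl (β i) (η i) ∧ β i (η i) < 0

/-- `v ≥_{W_x} u`. -/
def ChainGEAt (x v u : V) : Prop :=
  ∃ (m : ℕ) (η : ℕ → V) (β : ℕ → (V →ₗ[ℝ] ℝ)),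
    P.IsChainAt x m η β ∧ η 0 = v ∧ η m = u

/-- `x` belongs to the coweight lattice `P(R∨) = {x : α(x) ∈ ℤ ∀ α ∈ R}`. -/
def IsCoweight (x : V) : Prop := ∀ α ∈ P.R, ∃ n : ℤ, α x = (n : ℝ)

/-- The coroot lattice `Q(R∨)`, the group generated by the coroots. -/
def corootLattice : AddSubgroup V :=
  AddSubgroup.closure (P.coroot '' (P.R : Set (V →ₗ[ℝ] ℝ)))

/-- `w` is an element of the affine Weyl group `W_aff`, generated by the affine
reflections `σ_{α,t}(x) = x − (α(x) − t) • α∨`, `α ∈ R`, `t ∈ ℤ`. -/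
def IsAffWeyl (w : V → V) : Prop :=
  ∃ l : List ((V →ₗ[ℝ] ℝ) × ℤ), (∀ q ∈ l, q.1 ∈ P.R) ∧
    w = l.foldr (fun q f => (fun x => x - (q.1 x - (q.2 : ℝ)) • P.coroot q.1) ∘ f) id

/-- `w` is a word of length `n` in the simple reflections. -/
def SimpleWord (w : V → V) (n : ℕ) : Prop :=
  ∃ l : List (V →ₗ[ℝ] ℝ), l.length = n ∧ (∀ γ ∈ l, γ ∈ P.simple) ∧
    w = l.foldr (fun γ f => P.refl γ ∘ f) id

/-- The length function `ℓ(μ) = min{d_W(w,1) : w ∈ W, w⁻¹(μ) ∈ Δ}`. -/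
def ell (μ : V) : ℕ := sInf {n : ℕ | ∃ w : V → V, P.SimpleWord w n ∧ w μ ∈ P.chamber}

end CRS

/-- `p` is linear (affine) on `[s,t]` with velocity `v`. -/
def IsLinOn {V : Type*} [AddCommGroup V] [Module ℝ V]
    (p : ℝ → V) (s t : ℝ) (v : V) : Prop :=
  ∀ u ∈ Set.Icc s t, p u = p s + (u - s) • v

/-- `p` is piecewise linear on `[s,t]` with breakpoints `a 0 < … < a r` and
velocities `ν 0, …, ν (r-1)`. -/
def PLOn {V : Type*} [AddCommGroup V] [Module ℝ V]
    (p : ℝ → V) (s t : ℝ) (r : ℕ) (a : ℕ → ℝ) (ν : ℕ → V) : Prop :=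
  a 0 = s ∧ a r = t ∧ (∀ i < r, a i < a (i + 1)) ∧
    ∀ i < r, IsLinOn p (a i) (a (i + 1)) (ν i)

namespace CRS

variable {V : Type*} [NormedAddCommGroup V] [InnerProductSpace ℝ V]
  [FiniteDimensional ℝ V] (P : CRS V)

/-- `p` is a billiard path on `[s,t]` : piecewise linear, with all velocity vectors
in a single `W`-orbit. -/
def BilliardOn (p : ℝ → V) (s t : ℝ) : Prop :=
  ∃ (r : ℕ) (a : ℕ → ℝ) (ν : ℕ → V), 0 < r ∧ PLOn p s t r a ν ∧
    ∀ i j, i < r → j < r → P.SameOrbit (ν i) (ν j)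

/-- The `Δ`-length of `p` on `[s,t]` is `lam` : `lam = Σ_i (a (i+1) - a i) • u i` where
`u i` is the representative in `Δ` of the `W`-orbit of the velocity `ν i`. -/
def DeltaLenOn (p : ℝ → V) (s t : ℝ) (lam : V) : Prop :=
  ∃ (r : ℕ) (a : ℕ → ℝ) (ν u : ℕ → V), 0 < r ∧ PLOn p s t r a ν ∧
    (∀ i < r, u i ∈ P.chamber ∧ P.SameOrbit (ν i) (u i)) ∧
    lam = ∑ i ∈ Finset.range r, (a (i + 1) - a i) • u i

/-- The chain condition for a path `p` : at each `t ∈ (0,1)` there is `μ ≠ 0` with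
`p′₋(t) ≥_{W_{p(t)}} μ` and `μ ∼_W p′₊(t)`. -/
def ChainCondition (p : ℝ → V) : Prop :=
  ∀ t ∈ Set.Ioo (0 : ℝ) 1, ∀ vm vp : V,
    HasDerivWithinAt p vm (Set.Iic t) t → HasDerivWithinAt p vp (Set.Ici t) t →
    ∃ μ : V, μ ≠ 0 ∧ P.ChainGEAt (p t) vm μ ∧ P.SameChamber μ vp

/-- A Hecke path: a billiard path on `[0,1]` with `p′₋(t) ≥_{W_{p(t)}} p′₊(t)` for
all `t ∈ (0,1)`. -/
def IsHeckePath (p : ℝ → V) : Prop :=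
  (∃ (r : ℕ) (a : ℕ → ℝ) (ν : ℕ → V), 0 < r ∧ PLOn p 0 1 r a ν ∧
    ∀ i j, i < r → j < r → P.SameOrbit (ν i) (ν j)) ∧
  ∀ t ∈ Set.Ioo (0 : ℝ) 1, ∀ vm vp : V,
    HasDerivWithinAt p vm (Set.Iic t) t → HasDerivWithinAt p vp (Set.Ici t) t →
    P.ChainGEAt (p t) vm vp

end CRS

/-- The extension of a continuous path on `[0,1]` to `ℝ` by the projection to `[0,1]`. -/
def extIcc {V : Type*} [TopologicalSpace V]
    (p : C(Set.Icc (0 : ℝ) 1, V)) : ℝ → V :=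
  fun t => p (Set.projIcc 0 1 zero_le_one t)

/-- `p` is the concatenation `π_{μ 1} * ⋯ * π_{μ n}` of the geodesic segments with
increments `μ 1, …, μ n`, traversed consecutively with constant speed. -/
def ConcatOf {V : Type*} [NormedAddCommGroup V] [InnerProductSpace ℝ V]
    (p : ℝ → V) (n : ℕ) (μ : ℕ → V) : Prop :=
  ∃ (a : ℕ → ℝ) (v : ℕ → V), a 0 = 0 ∧ a n = 1 ∧ (∀ j < n, a j ≤ a (j + 1)) ∧
    (∀ j, 1 ≤ j → j ≤ n →
      IsLinOn p (a (j - 1)) (a j) (v j) ∧ (a j - a (j - 1)) • v j = μ j) ∧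
    (∀ j k, 1 ≤ j → j ≤ n → 1 ≤ k → k ≤ n → ‖v j‖ = ‖v k‖)

/-- The path `t ↦ −t • v` on `[0, 1/2]` followed by `t ↦ (t−1) • v` on `[1/2, 1]`. -/
def zigzag {V : Type*} [AddCommGroup V] [Module ℝ V] (v : V) : ℝ → V :=
  fun t => if t ≤ 1 / 2 then (-t) • v else (t - 1) • v


namespace CRS

variable {V : Type*} [NormedAddCommGroup V] [InnerProductSpace ℝ V]
  [FiniteDimensional ℝ V] (P : CRS V)

/-- A `W`-invariant, positively homogeneous gauge. -/
def gauge (x : V) : ℝ := ∑ β ∈ P.R, |β x|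

theorem gauge_smul (c : ℝ) (hc : 0 < c) (x : V) : P.gauge (c • x) = c * P.gauge x := by
  unfold gauge
  rw [Finset.mul_sum]
  refine Finset.sum_congr rfl fun β _ => ?_
  rw [map_smul, smul_eq_mul, abs_mul, abs_of_pos hc]

theorem gauge_refl (α : V →ₗ[ℝ] ℝ) (hα : α ∈ P.R) (x : V) :
    P.gauge (P.refl α x) = P.gauge x := by
  unfold gauge
  have h2 := P.pairing_self α hα
  refine Finset.sum_nbij' (fun β => β - β (P.coroot α) • α)
    (fun β => β - β (P.coroot α) • α) ?_ ?_ ?_ ?_ ?_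
  · intro β hβ; exact P.reflect_mem α hα β hβ
  · intro β hβ; exact P.reflect_mem α hα β hβ
  · intro β hβ; ext y; simp [h2]; ring
  · intro β hβ; ext y; simp [h2]; ring
  · intro β hβ
    congr 1
    simp [refl]; ring

theorem refl_smul (α : V →ₗ[ℝ] ℝ) (c : ℝ) (x : V) :
    P.refl α (c • x) = c • P.refl α x := by
  simp [refl, smul_sub, smul_smul]

theorem IsCoweight.add {x y : V} (hx : P.IsCoweight x) (hy : P.IsCoweight y) :
    P.IsCoweight (x + y) := by
  intro α hα
  obtain ⟨m, hm⟩ := hx α hα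
  obtain ⟨n, hn⟩ := hy α hα
  exact ⟨m + n, by simp [hm, hn]⟩

theorem IsCoweight.neg {x : V} (hx : P.IsCoweight x) : P.IsCoweight (-x) := by
  intro α hα
  obtain ⟨m, hm⟩ := hx α hα
  exact ⟨-m, by simp [hm]⟩

theorem IsCoweight.coroot_smul (β : V →ₗ[ℝ] ℝ) (hβ : β ∈ P.R) (n : ℤ) :
    P.IsCoweight ((n : ℝ) • P.coroot β) := by
  intro α hα
  obtain ⟨m, hm⟩ := P.crystal α hα β hβ
  exact ⟨n * m, by simp [hm]⟩

theorem orbit_induction (Q : V → Prop) (hQ : ∀ α ∈ P.R, ∀ x, Q x → Q (P.refl α x))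
    {x y : V} (h : P.SameOrbit x y) (hx : Q x) : Q y := by
  obtain ⟨w, ⟨l, hl, rfl⟩, rfl⟩ := h
  induction l with
  | nil => simpa using hx
  | cons γ l ih =>
    simp only [List.foldr_cons, Function.comp_apply]
    exact hQ γ (hl γ (by simp)) _ (ih fun δ hδ => hl δ (by simp [hδ]))

theorem IsCoweight.refl (β : V →ₗ[ℝ] ℝ) (hβ : β ∈ P.R) {x : V} (hx : P.IsCoweight x) :
    P.IsCoweight (P.refl β x) := by
  obtain ⟨n, hn⟩ := hx β hβ
  have := IsCoweight.add P hx (IsCoweight.neg P (IsCoweight.coroot_smul P β hβ n))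
  rwa [← hn, ← sub_eq_add_neg] at this

/-- Transport of congruences modulo coweights along a chain of integral reflections. -/
theorem congr_chain (a : ℝ) (x : V) (m : ℕ) (η : ℕ → V) (β : ℕ → (V →ₗ[ℝ] ℝ))
    (hβ : ∀ i < m, β i ∈ P.R ∧ η (i + 1) = P.refl (β i) (η i))
    (h0 : P.IsCoweight (x - a • η 0))
    (hint : ∀ i < m, P.IsCoweight (x - a • η i) → ∃ n : ℤ, β i (a • η i) = (n : ℝ)) :
    ∀ i ≤ m, P.IsCoweight (x - a • η i) := by
  intro i
  induction i with
  | zero => intro _; exact h0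
  | succ i ih =>
    intro hi
    have hc := ih (by omega)
    obtain ⟨hb, he⟩ := hβ i hi
    obtain ⟨n, hn⟩ := hint i hi hc
    have := IsCoweight.add P hc (IsCoweight.coroot_smul P (β i) hb n)
    rw [← hn] at this
    convert this using 1
    rw [he]
    simp only [CRS.refl, smul_sub, smul_smul, map_smul, smul_eq_mul]
    abel

theorem int_iff {x y : V} (h : P.IsCoweight (x - y)) (β : V →ₗ[ℝ] ℝ) (hβ : β ∈ P.R) :
    (∃ n : ℤ, β x = (n : ℝ)) ↔ ∃ n : ℤ, β y = (n : ℝ) := by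
  obtain ⟨m, hm⟩ := h β hβ
  rw [map_sub] at hm
  constructor
  · rintro ⟨n, hn⟩; exact ⟨n - m, by push_cast; linarith⟩
  · rintro ⟨n, hn⟩; exact ⟨n + m, by push_cast; linarith⟩

theorem IsChain.smul {m : ℕ} {η : ℕ → V} {β : ℕ → (V →ₗ[ℝ] ℝ)} (h : P.IsChain m η β)
    (c : ℝ) (hc : 0 < c) : P.IsChain m (fun i => c • η i) β := by
  refine ⟨fun i hi => smul_ne_zero hc.ne' (h.1 i hi), fun i hi => ?_⟩
  obtain ⟨h1, h2, h3⟩ := h.2 i hi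
  refine ⟨h1, ?_, ?_⟩
  · simp only [h2, refl_smul]
  · simp only [map_smul, smul_eq_mul]
    exact mul_neg_of_pos_of_neg hc h3

theorem chainLengths_smul {x y : V} {m : ℕ} (h : m ∈ P.chainLengths x y)
    (c : ℝ) (hc : 0 < c) : m ∈ P.chainLengths (c • x) (c • y) := by
  obtain ⟨η, β, h1, rfl, rfl⟩ := h
  exact ⟨_, β, IsChain.smul P h1 c hc, rfl, rfl⟩

theorem DistW.smul {x y : V} {d : ℕ} (h : P.DistW x y d) (c : ℝ) (hc : 0 < c) :
    P.DistW (c • x) (c • y) d := by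
  refine ⟨chainLengths_smul P h.1 c hc, fun m hm => h.2 ?_⟩
  have := chainLengths_smul P hm c⁻¹ (inv_pos.mpr hc)
  simpa [smul_smul, inv_mul_cancel₀ hc.ne'] using this

/-- At a break point, `p (a i) ≡ a i • ν (i-1)` modulo coweights. -/
theorem path_congr (r : ℕ) (a : ℕ → ℝ) (ν : ℕ → V)
    (ha0 : a 0 = 0) (hmono : ∀ i < r, a i < a (i + 1)) (p : ℝ → V) (hp0 : p 0 = 0)
    (hp : ∀ i < r, IsLinOn p (a i) (a (i + 1)) (ν i))
    (h : ∀ i, 0 < i → i < r → P.IsCoweight (p (a i) - a i • ν (i - 1)) →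
      P.AChainFor (a i) (ν (i - 1)) (ν i)) :
    ∀ i, i < r → P.IsCoweight (p (a (i + 1)) - a (i + 1) • ν i) := by
  have key : ∀ i < r, p (a (i + 1)) - a (i + 1) • ν i = p (a i) - a i • ν i := by
    intro i hi
    rw [hp i hi (a (i + 1)) ⟨(hmono i hi).le, le_rfl⟩, sub_smul]
    abel
  intro i
  induction i with
  | zero =>
    intro hi
    rw [key 0 hi, ha0, hp0]
    intro α _
    exact ⟨0, by simp⟩
  | succ i ih =>
    intro hi
    have hc := ih (by omega)
    obtain ⟨m, η, β, hch, h0, hm, hint, -⟩ := h (i + 1) (by omega) hi (by simpa using hc)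
    rw [key (i + 1) hi, ← hm]
    refine P.congr_chain (a (i + 1)) _ m η β (fun j hj => ?_) ?_ (fun j hj _ => hint j hj)
      m le_rfl
    · exact ⟨P.Rpos_subset (hch.2 j hj).1, (hch.2 j hj).2.1⟩
    · rw [h0]; simpa using hc

end CRS

/-- A billiard path of Δ-length `lam ∈ Δ ∩ P(R∨)` is an LS path if and only if it is a
Hecke path satisfying the maximal chain condition at each break point. -/
theorem ls_path_iff_maximal_integral_hecke_path
    {V : Type*} [NormedAddCommGroup V] [InnerProductSpace ℝ V]
    [FiniteDimensional ℝ V] (P : CRS V)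
    (lam : V) (hlamΔ : lam ∈ P.chamber) (hlam0 : lam ≠ 0) (hlamwt : P.IsCoweight lam)
    (r : ℕ) (hr : 0 < r) (a : ℕ → ℝ) (ν : ℕ → V)
    (ha0 : a 0 = 0) (har : a r = 1) (hmono : ∀ i < r, a i < a (i + 1))
    (hν : ∀ i < r, P.SameOrbit lam (ν i))
    (hbreak : ∀ i, 0 < i → i < r → ν (i - 1) ≠ ν i)
    (p : ℝ → V) (hp0 : p 0 = 0)
    (hp : ∀ i < r, IsLinOn p (a i) (a (i + 1)) (ν i)) :
    ((∀ i ≤ r, ∃ q : ℚ, a i = (q : ℝ)) ∧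
      (∀ i, i + 1 < r → P.ChainGT (ν i) (ν (i + 1))) ∧
      (∀ i, 0 < i → i < r → P.AChainFor (a i) (ν (i - 1)) (ν i)))
    ↔
    (∀ i, 0 < i → i < r →
      ∃ (s : ℕ) (η : ℕ → V) (β : ℕ → (V →ₗ[ℝ] ℝ)) (c c' : ℝ),
        0 < c ∧ 0 < c' ∧ η 0 = c • ν (i - 1) ∧ η s = c' • ν i ∧
        (∀ j ≤ s, η j ≠ 0) ∧
        ∀ j < s, β j ∈ P.Rpos ∧ (∃ n : ℤ, β j (p (a i)) = (n : ℝ)) ∧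
          η (j + 1) = P.refl (β j) (η j) ∧ β j (η j) < 0 ∧
          P.DistW (η j) (η (j + 1)) 1) := by
  have hcw : ∀ i < r, P.IsCoweight (ν i) := fun i hi =>
    P.orbit_induction P.IsCoweight (fun α hα x hx => CRS.IsCoweight.refl P α hα hx)
      (hν i hi) hlamwt
  have hg : ∀ i < r, P.gauge (ν i) = P.gauge lam := fun i hi =>
    P.orbit_induction (fun x => P.gauge x = P.gauge lam)
      (fun α hα x hx => (P.gauge_refl α hα x).trans hx) (hν i hi) rfl
  constructor
  · rintro ⟨-, -, hA⟩ i hi0 hir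
    obtain ⟨m, η, β, hch, h0, hm, hint, hd⟩ := hA i hi0 hir
    have hc := P.path_congr r a ν ha0 hmono p hp0 hp (fun i h1 h2 _ => hA i h1 h2)
      (i - 1) (by omega)
    rw [Nat.sub_add_cancel hi0, ← h0] at hc
    have hall := P.congr_chain (a i) _ m η β
      (fun j hj => ⟨P.Rpos_subset (hch.2 j hj).1, (hch.2 j hj).2.1⟩) hc
      (fun j hj _ => hint j hj)
    refine ⟨m, η, β, 1, 1, one_pos, one_pos, by simpa using h0, by simpa using hm,
      hch.1, fun j hj => ?_⟩
    obtain ⟨h1, h2, h3⟩ := hch.2 j hj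
    exact ⟨h1, (P.int_iff (hall j hj.le) (β j) (P.Rpos_subset h1)).2 (hint j hj), h2, h3,
      hd j hj⟩
  · intro H
    -- the gauge of `lam` is positive as soon as there is a break point
    have hgpos : ∀ i, 0 < i → i < r → 0 < P.gauge lam := by
      intro i hi0 hir
      have hnn : 0 ≤ P.gauge lam := Finset.sum_nonneg fun _ _ => abs_nonneg _
      refine lt_of_le_of_ne hnn fun h0 => hbreak i hi0 hir ?_
      have hz : ∀ β ∈ P.R, β lam = 0 := fun β hβ =>
        abs_eq_zero.mp ((Finset.sum_eq_zero_iff_of_nonneg fun _ _ => abs_nonneg _).mp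
          h0.symm β hβ)
      have hfix : ∀ j < r, ν j = lam := fun j hj =>
        P.orbit_induction (fun x => x = lam)
          (fun α hα x hx => by simp [CRS.refl, hx, hz α hα]) (hν j hj) rfl
      rw [hfix _ (by omega), hfix i hir]
    have hstep : ∀ i, 0 < i → i < r → P.IsCoweight (p (a i) - a i • ν (i - 1)) →
        P.AChainFor (a i) (ν (i - 1)) (ν i) := by
      intro i hi0 hir hc
      obtain ⟨s, η, β, c, c', hc0, hc0', h0, hs, hne, hj⟩ := H i hi0 hir
      have hgj : ∀ j ≤ s, P.gauge (η j) = P.gauge (η 0) := by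
        intro j
        induction j with
        | zero => intro _; rfl
        | succ j ih =>
          intro hjs
          rw [(hj j hjs).2.2.1, P.gauge_refl _ (P.Rpos_subset (hj j hjs).1), ih (by omega)]
      have hcc : c' = c := by
        have := hgj s le_rfl
        rw [hs, h0, P.gauge_smul _ hc0, P.gauge_smul _ hc0', hg i hir, hg (i - 1) (by omega)] at this
        exact mul_right_cancel₀ (hgpos i hi0 hir).ne' this
      subst hcc
      have hinv : 0 < c'⁻¹ := inv_pos.mpr hc0
      have hch : P.IsChain s η β :=
        ⟨hne, fun j h => ⟨(hj j h).1, (hj j h).2.2.1, (hj j h).2.2.2.1⟩⟩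
      have hch' := CRS.IsChain.smul P hch c'⁻¹ hinv
      have h0' : c'⁻¹ • η 0 = ν (i - 1) := by
        rw [h0, smul_smul, inv_mul_cancel₀ hc0.ne', one_smul]
      have hs' : c'⁻¹ • η s = ν i := by
        rw [hs, smul_smul, inv_mul_cancel₀ hc0.ne', one_smul]
      have hI : ∀ j < s, P.IsCoweight (p (a i) - a i • (c'⁻¹ • η j)) →
          ∃ n : ℤ, β j (a i • (c'⁻¹ • η j)) = (n : ℝ) := fun j h hx =>
        (P.int_iff hx (β j) (P.Rpos_subset (hj j h).1)).1 (hj j h).2.1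
      have hall := P.congr_chain (a i) (p (a i)) s (fun j => c'⁻¹ • η j) β
        (fun j h => ⟨P.Rpos_subset (hch'.2 j h).1, (hch'.2 j h).2.1⟩)
        (by simpa only [h0'] using hc) hI
      exact ⟨s, fun j => c'⁻¹ • η j, β, hch', h0', hs', fun j h => hI j h (hall j h.le),
        fun j h => CRS.DistW.smul P (hj j h).2.2.2.2 _ hinv⟩
    have hcong := P.path_congr r a ν ha0 hmono p hp0 hp hstep
    have hA : ∀ i, 0 < i → i < r → P.AChainFor (a i) (ν (i - 1)) (ν i) := by
      intro i hi0 hir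
      have := hcong (i - 1) (by omega)
      rw [Nat.sub_add_cancel hi0] at this
      exact hstep i hi0 hir this
    refine ⟨?_, ?_, hA⟩
    · intro i hir
      rcases Nat.eq_zero_or_pos i with rfl | hi0
      · exact ⟨0, by simp [ha0]⟩
      rcases hir.eq_or_lt with rfl | hir
      · exact ⟨1, by simp [har]⟩
      obtain ⟨m, η, β, hch, h0, hm, hint, -⟩ := hA i hi0 hir
      have hmpos : 0 < m := by
        rcases Nat.eq_zero_or_pos m with rfl | h
        · exact absurd (h0.symm.trans hm) (hbreak i hi0 hir)
        · exact h
      obtain ⟨h1, -, h3⟩ := hch.2 0 hmpos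
      obtain ⟨n, hn⟩ := hint 0 hmpos
      obtain ⟨k, hk⟩ := hcw (i - 1) (by omega) (β 0) (P.Rpos_subset h1)
      rw [← h0] at hk
      rw [map_smul, smul_eq_mul, hk] at hn
      have hk0 : (k : ℝ) ≠ 0 := by rw [← hk]; exact h3.ne
      refine ⟨(n : ℚ) / k, ?_⟩
      push_cast
      rw [eq_div_iff hk0, hn]
    · intro i hir
      obtain ⟨m, η, β, hch, h0, hm, -, -⟩ := hA (i + 1) (by omega) hir
      exact ⟨⟨m, η, β, hch, by simpa using h0, hm⟩,
        by simpa using hbreak (i + 1) (by omega) hir⟩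
end
end

section
/- Let a > 0 and let ν, μ be nonzero vectors in the same W-orbit. A W-chain (λ₀ = ν, λ₁, …, λ_s = μ), with reflections τ_{β_i} (β_i ∈ R⁺, τ_{β_i}(λ_{i−1}) = λ_i, β_i(λ_{i−1}) < 0), is an a-chain for (ν, μ) if and only if both of the following hold: (1) β_i(aν) ∈ ℤ for every i = 1, …, s (i.e. every reflection used in the chain is the linear part of a reflection of the affine Weyl group W_aff fixing the point aν); and (2) dist_W(λ_{i−1}, λ_i) = 1 for every i (the chain is maximal as a W-chain). -/
noncomputable section

theorem achain_aux
    {V : Type*} [NormedAddCommGroup V] [InnerProductSpace ℝ V]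
    [FiniteDimensional ℝ V] (P : CRS V) (a : ℝ)
    (s : ℕ) (η : ℕ → V) (β : ℕ → (V →ₗ[ℝ] ℝ))
    (hchain : P.IsChain s η β) (k : ℕ) (hk : k ≤ s)
    (hint : ∀ i < k, ∃ n : ℤ, β i (a • η i) = (n : ℝ)) :
    ∀ γ ∈ P.R, ∃ n : ℤ, γ (a • η k) = γ (a • η 0) + (n : ℝ) := by
  induction k with
  | zero => intro γ _; exact ⟨0, by simp⟩
  | succ k ih =>
    intro γ hγ
    obtain ⟨n, hn⟩ := ih (by omega) (fun i hi => hint i (by omega)) γ hγ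
    obtain ⟨m, hm⟩ := hint k (by omega)
    obtain ⟨hb, he, -⟩ := hchain.2 k (by omega)
    obtain ⟨c, hc⟩ := P.crystal γ hγ (β k) (P.Rpos_subset hb)
    refine ⟨n - m * c, ?_⟩
    rw [he]
    simp only [CRS.refl, map_smul, map_sub, smul_eq_mul, hc] at *
    push_cast
    rw [← hm]
    linear_combination hn

/-- A `W`-chain is an `a`-chain if and only if every reflecting root is integral at the
point `a • ν` (i.e. every reflection used is the linear part of an affine reflection
fixing `a • ν`) and each step of the chain is maximal (`dist_W = 1`). -/
theorem achain_iff_integral_at_start_and_maximal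
    {V : Type*} [NormedAddCommGroup V] [InnerProductSpace ℝ V]
    [FiniteDimensional ℝ V] (P : CRS V)
    (a : ℝ) (ha : 0 < a) (ν μ : V) (hν : ν ≠ 0) (hμ : μ ≠ 0) (horb : P.SameOrbit ν μ)
    (s : ℕ) (η : ℕ → V) (β : ℕ → (V →ₗ[ℝ] ℝ))
    (hchain : P.IsChain s η β) (h0 : η 0 = ν) (hs : η s = μ) :
    ((∀ i < s, ∃ n : ℤ, β i (a • η i) = (n : ℝ)) ∧
      (∀ i < s, P.DistW (η i) (η (i + 1)) 1))
    ↔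
    ((∀ i < s, ∃ n : ℤ, β i (a • ν) = (n : ℝ)) ∧
      (∀ i < s, P.DistW (η i) (η (i + 1)) 1)) := by
  subst h0
  refine and_congr_left fun _ => ⟨fun h i hi => ?_, fun h i => ?_⟩
  · obtain ⟨n, hn⟩ := achain_aux P a s η β hchain i hi.le
      (fun j hj => h j (by omega)) (β i) (P.Rpos_subset (hchain.2 i hi).1)
    obtain ⟨m, hm⟩ := h i hi
    exact ⟨m - n, by push_cast; linarith⟩
  · induction i using Nat.strong_induction_on with
    | _ i ih =>
      intro hi
      obtain ⟨n, hn⟩ := achain_aux P a s η β hchain i hi.le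
        (fun j hj => ih j hj (by omega)) (β i) (P.Rpos_subset (hchain.2 i hi).1)
      obtain ⟨m, hm⟩ := h i hi
      exact ⟨m + n, by push_cast; linarith⟩
end
end

section
/- Let (λ₀, λ₁, …, λ_s) be a W-chain with reflections τ_{β_i} (β_i ∈ R⁺, τ_{β_i}(λ_{i−1}) = λ_i, β_i(λ_{i−1}) < 0), and let a > 0. If β_i(aλ_{i−1}) ∈ ℤ for every i = 1, …, s, then β_i(aλ₀) ∈ ℤ for every i = 1, …, s. -/
noncomputable section

/-- If all roots of a `W`-chain are integral along the chain scaled by `a`, then they are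
all integral at the scaled initial point `a • λ₀`. -/
theorem chain_integrality_at_start
    {V : Type*} [NormedAddCommGroup V] [InnerProductSpace ℝ V]
    [FiniteDimensional ℝ V] (P : CRS V)
    (a : ℝ) (ha : 0 < a) (s : ℕ) (η : ℕ → V) (β : ℕ → (V →ₗ[ℝ] ℝ))
    (hchain : P.IsChain s η β)
    (hint : ∀ i < s, ∃ n : ℤ, β i (a • η i) = (n : ℝ)) :
    ∀ i < s, ∃ n : ℤ, β i (a • η 0) = (n : ℝ) := by
  have key : ∀ i ≤ s, ∀ α ∈ P.R, ∃ n : ℤ, α (a • η i) = α (a • η 0) + (n : ℝ) := by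
    intro i
    induction i with
    | zero => intro _ α _; exact ⟨0, by simp⟩
    | succ k ih =>
      intro hk α hα
      obtain ⟨n, hn⟩ := ih (by omega) α hα
      obtain ⟨hb, he, _⟩ := hchain.2 k (by omega)
      obtain ⟨m, hm⟩ := hint k (by omega)
      obtain ⟨c, hc⟩ := P.crystal α hα (β k) (P.Rpos_subset hb)
      refine ⟨n - m * c, ?_⟩
      rw [he]
      simp only [CRS.refl, map_smul, map_sub, smul_eq_mul] at hn hm ⊢
      rw [hc]
      push_cast
      linear_combination hn - (c : ℝ) * hm
  intro i hi
  obtain ⟨n, hn⟩ := key i hi.le (β i) (P.Rpos_subset (hchain.2 i hi).1)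
  obtain ⟨m, hm⟩ := hint i hi
  exact ⟨m - n, by push_cast; linarith⟩
end
end

section
/- Let Φ′ ⊆ Φ and let W′ ≤ W be the subgroup generated by {τ_α : α ∈ Φ′}. For any two nonzero vectors α, δ ∈ V the following are equivalent: (1) there exist nonzero β, γ with α ≥_{W′} β, β ∼_W γ and γ ≥_{W′} δ; (2) there exists a nonzero β with α ≥_{W′} β and β ∼_W δ; (3) there exists a nonzero γ with α ∼_W γ and γ ≥_{W′} δ. -/
noncomputable section

namespace CRS

variable {V : Type*} [NormedAddCommGroup V] [InnerProductSpace ℝ V]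
  [FiniteDimensional ℝ V] (P : CRS V)

/-- One step of a `W′`-chain. -/
def ChainStep (Φ' : Finset (V →ₗ[ℝ] ℝ)) (x y : V) : Prop :=
  ∃ β ∈ P.Rpos, P.IsWeylSub Φ' (P.refl β) ∧ y = P.refl β x ∧ β x < 0

theorem root_refl {β : V →ₗ[ℝ] ℝ} (hβ : β ∈ P.R) (x : V) : β (P.refl β x) = - β x := by
  simp only [refl, map_sub, map_smul, smul_eq_mul, P.pairing_self β hβ]
  ring

theorem refl_refl {β : V →ₗ[ℝ] ℝ} (hβ : β ∈ P.R) (x : V) : P.refl β (P.refl β x) = x := by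
  have h := P.root_refl hβ x
  conv_lhs => unfold refl
  change P.refl β x - β (P.refl β x) • P.coroot β = x
  rw [h]
  simp [refl]

theorem refl_of_zero {β : V →ₗ[ℝ] ℝ} {x : V} (h : β x = 0) : P.refl β x = x := by
  simp [refl, h]

theorem ChainStep.ne_zero_left {Φ' : Finset (V →ₗ[ℝ] ℝ)} {x y : V}
    (h : P.ChainStep Φ' x y) : x ≠ 0 := by
  obtain ⟨β, -, -, -, h⟩ := h
  rintro rfl
  simp at h

theorem ChainStep.ne_zero_right {Φ' : Finset (V →ₗ[ℝ] ℝ)} {x y : V}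
    (h : P.ChainStep Φ' x y) : y ≠ 0 := by
  obtain ⟨β, hβ, -, hy, h⟩ := h
  rintro rfl
  have := P.root_refl (P.Rpos_subset hβ) x
  rw [← hy] at this
  simp at this
  linarith

theorem chainGESub_iff (Φ' : Finset (V →ₗ[ℝ] ℝ)) (ν μ : V) :
    P.ChainGESub Φ' ν μ ↔ ν ≠ 0 ∧ Relation.ReflTransGen (P.ChainStep Φ') ν μ := by
  constructor
  · rintro ⟨m, η, β, ⟨h0, hs⟩, rfl, rfl⟩
    refine ⟨h0 0 (Nat.zero_le _), ?_⟩
    have key : ∀ k ≤ m, Relation.ReflTransGen (P.ChainStep Φ') (η 0) (η k) := by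
      intro k
      induction k with
      | zero => intro _; exact .refl
      | succ k ih =>
        intro hk
        obtain ⟨h1, h2, h3, h4⟩ := hs k hk
        exact (ih (by omega)).tail ⟨β k, h1, h2, h3, h4⟩
    exact key m le_rfl
  · rintro ⟨hν, h⟩
    induction h using Relation.ReflTransGen.head_induction_on with
    | refl => exact ⟨0, fun _ => μ, fun _ => 0, ⟨fun _ _ => hν, by simp⟩, rfl, rfl⟩
    | head hab _ ih =>
      rename_i a b _
      obtain ⟨m, η, β, ⟨h0, hs⟩, h1, h2⟩ := ih (ChainStep.ne_zero_right P hab)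
      obtain ⟨γ, hγ, hγ', hb, hlt⟩ := hab
      refine ⟨m + 1, fun i => Nat.casesOn i a η, fun i => Nat.casesOn i γ β, ⟨?_, ?_⟩, rfl, h2⟩
      · rintro (_ | i) hi
        · exact hν
        · exact h0 i (by omega)
      · rintro (_ | i) hi
        · exact ⟨hγ, hγ', h1.trans hb, hlt⟩
        · exact hs i (by omega)

theorem foldr_append_refl (l : List (V →ₗ[ℝ] ℝ)) (β : V →ₗ[ℝ] ℝ) :
    (l ++ [β]).foldr (fun γ f => P.refl γ ∘ f) id =
      l.foldr (fun γ f => P.refl γ ∘ f) id ∘ P.refl β := by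
  induction l with
  | nil => rfl
  | cons γ l ih => simp only [List.cons_append, List.foldr_cons, ih]; rfl

theorem SameChamber.refl_refl {x y : V} (h : P.SameChamber x y) {β : V →ₗ[ℝ] ℝ}
    (hβ : β ∈ P.R) : P.SameChamber (P.refl β x) (P.refl β y) := by
  obtain ⟨w, ⟨l, hl, rfl⟩, hx, hy⟩ := h
  refine ⟨_, ⟨l ++ [β], ?_, rfl⟩, ?_, ?_⟩
  · intro γ hγ
    rcases List.mem_append.1 hγ with h | h
    · exact hl γ h
    · rw [List.mem_singleton.1 h]; exact hβ
  · rw [foldr_append_refl, Function.comp_apply, P.refl_refl hβ]; exact hx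
  · rw [foldr_append_refl, Function.comp_apply, P.refl_refl hβ]; exact hy

theorem SameChamber.symm {x y : V} (h : P.SameChamber x y) : P.SameChamber y x := by
  obtain ⟨w, hw, hx, hy⟩ := h
  exact ⟨w, hw, hy, hx⟩

theorem exists_root_comp (l : List (V →ₗ[ℝ] ℝ)) (hl : ∀ γ ∈ l, γ ∈ P.R)
    {β : V →ₗ[ℝ] ℝ} (hβ : β ∈ P.R) :
    ∃ β' ∈ P.R, ∀ x, β' (l.foldr (fun γ f => P.refl γ ∘ f) id x) = β x := by
  induction l with
  | nil => exact ⟨β, hβ, fun _ => rfl⟩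
  | cons γ l ih =>
    obtain ⟨β', hβ', h⟩ := ih (fun γ hγ => hl γ (List.mem_cons_of_mem _ hγ))
    have hγ : γ ∈ P.R := hl γ List.mem_cons_self
    refine ⟨β' - β' (P.coroot γ) • γ, P.reflect_mem γ hγ β' hβ', fun x => ?_⟩
    rw [← h x, List.foldr_cons, Function.comp_apply]
    generalize l.foldr (fun γ f => P.refl γ ∘ f) id x = y
    rw [LinearMap.sub_apply, LinearMap.smul_apply, P.root_refl hγ]
    simp only [refl, map_sub, map_smul, smul_eq_mul]
    ring

theorem SameChamber.nonneg {x y : V} (h : P.SameChamber x y) {β : V →ₗ[ℝ] ℝ}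
    (hβ : β ∈ P.R) (hx : 0 < β x) : 0 ≤ β y := by
  obtain ⟨w, ⟨l, hl, rfl⟩, hwx, hwy⟩ := h
  obtain ⟨β', hβ', h⟩ := P.exists_root_comp l hl hβ
  rw [← h] at hx ⊢
  by_cases hp : β' ∈ P.Rpos
  · exact hwy β' hp
  · have hn : -β' ∈ P.Rpos := by
      by_contra hc
      exact hp ((P.pos_iff β' hβ').2 hc)
    have := hwx _ hn
    rw [LinearMap.neg_apply] at this
    linarith

theorem swap_right {Φ' : Finset (V →ₗ[ℝ] ℝ)} {a b d : V}
    (h : Relation.ReflTransGen (P.ChainStep Φ') a b) (hd : d ≠ 0) (hbd : P.SameChamber b d) :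
    ∃ c, c ≠ 0 ∧ P.SameChamber a c ∧ Relation.ReflTransGen (P.ChainStep Φ') c d := by
  induction h using Relation.ReflTransGen.head_induction_on with
  | refl => exact ⟨d, hd, hbd, .refl⟩
  | head hab _ ih =>
    rename_i a b' _
    obtain ⟨c, hc, hbc, hcd⟩ := ih
    obtain ⟨β, hβ, hβ', rfl, hlt⟩ := hab
    have hR := P.Rpos_subset hβ
    have hch := SameChamber.refl_refl P hbc hR
    rw [P.refl_refl hR] at hch
    have h0 : 0 ≤ β c := SameChamber.nonneg P hbc hR (by rw [P.root_refl hR]; linarith)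
    rcases h0.eq_or_lt with h0 | h0
    · rw [P.refl_of_zero h0.symm] at hch
      exact ⟨c, hc, hch, hcd⟩
    · have hst : P.ChainStep Φ' (P.refl β c) c :=
        ⟨β, hβ, hβ', (P.refl_refl hR c).symm, by rw [P.root_refl hR]; linarith⟩
      exact ⟨_, ChainStep.ne_zero_left P hst, hch, hcd.head hst⟩

theorem swap_left {Φ' : Finset (V →ₗ[ℝ] ℝ)} {a c d : V}
    (h : Relation.ReflTransGen (P.ChainStep Φ') c d) (ha : a ≠ 0) (hac : P.SameChamber a c) :
    ∃ b, b ≠ 0 ∧ Relation.ReflTransGen (P.ChainStep Φ') a b ∧ P.SameChamber b d := by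
  induction h with
  | refl => exact ⟨a, ha, .refl, hac⟩
  | tail _ hcd ih =>
    rename_i c' d' _
    obtain ⟨b, hb, hab, hbc⟩ := ih
    obtain ⟨β, hβ, hβ', rfl, hlt⟩ := hcd
    have hR := P.Rpos_subset hβ
    have hch := SameChamber.refl_refl P hbc hR
    have h0 : 0 ≤ (-β) b :=
      SameChamber.nonneg P (SameChamber.symm P hbc) (P.neg_mem β hR)
        (by rw [LinearMap.neg_apply]; linarith)
    rw [LinearMap.neg_apply] at h0
    rcases h0.eq_or_lt with h0 | h0
    · rw [P.refl_of_zero (x := b) (by linarith)] at hch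
      exact ⟨b, hb, hab, hch⟩
    · have hst : P.ChainStep Φ' b (P.refl β b) := ⟨β, hβ, hβ', rfl, by linarith⟩
      exact ⟨_, ChainStep.ne_zero_right P hst, hab.tail hst, hch⟩

end CRS

/-- The three forms of the relation `α ≳_{W′} δ` are equivalent. -/
theorem gtrsim_tfae
    {V : Type*} [NormedAddCommGroup V] [InnerProductSpace ℝ V]
    [FiniteDimensional ℝ V] (P : CRS V)
    (Φ' : Finset (V →ₗ[ℝ] ℝ)) (hΦ' : Φ' ⊆ P.simple)
    (α δ : V) (hα : α ≠ 0) (hδ : δ ≠ 0) :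
    ((∃ b c : V, b ≠ 0 ∧ c ≠ 0 ∧
        P.ChainGESub Φ' α b ∧ P.SameChamber b c ∧ P.ChainGESub Φ' c δ) ↔
      (∃ b : V, b ≠ 0 ∧ P.ChainGESub Φ' α b ∧ P.SameChamber b δ)) ∧
    ((∃ b : V, b ≠ 0 ∧ P.ChainGESub Φ' α b ∧ P.SameChamber b δ) ↔
      (∃ c : V, c ≠ 0 ∧ P.SameChamber α c ∧ P.ChainGESub Φ' c δ)) := by
  simp only [CRS.chainGESub_iff]
  refine ⟨⟨?_, ?_⟩, ⟨?_, ?_⟩⟩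
  · rintro ⟨b, c, hb, hc, ⟨-, hab⟩, hbc, -, hcd⟩
    obtain ⟨b', hb', h1, h2⟩ := P.swap_left hcd hb hbc
    exact ⟨b', hb', ⟨hα, hab.trans h1⟩, h2⟩
  · rintro ⟨b, hb, hab, hbd⟩
    exact ⟨b, δ, hb, hδ, hab, hbd, hδ, .refl⟩
  · rintro ⟨b, hb, ⟨-, hab⟩, hbd⟩
    obtain ⟨c, hc, h1, h2⟩ := P.swap_right hab hδ hbd
    exact ⟨c, hc, h1, hc, h2⟩
  · rintro ⟨c, hc, hac, -, hcd⟩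
    obtain ⟨b, hb, h1, h2⟩ := P.swap_left hcd hα hac
    exact ⟨b, hb, ⟨hα, h1⟩, h2⟩
end
end

section
/- Assume R spans V∗. Then the set of rational points of the unit sphere S of V, i.e. the set of normalized vectors ν/‖ν‖ with ν a nonzero element of the coweight lattice P(R∨), is dense in S. -/
noncomputable section

/-- The sum of squares form `B(x,y) = ∑ β(x) β(y)` is invariant under reflections. -/
theorem CRS.B_inv {V : Type*} [NormedAddCommGroup V] [InnerProductSpace ℝ V]
    [FiniteDimensional ℝ V] (P : CRS V) (α : V →ₗ[ℝ] ℝ) (hα : α ∈ P.R) (x y : V) :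
    ∑ β ∈ P.R, β (P.refl α x) * β (P.refl α y) = ∑ β ∈ P.R, β x * β y := by
  have key : ∀ β : V →ₗ[ℝ] ℝ, ∀ z, β (P.refl α z) = (β - β (P.coroot α) • α) z := by
    intro β z
    simp [CRS.refl]
    ring
  have invol : ∀ β : V →ₗ[ℝ] ℝ,
      (β - β (P.coroot α) • α) - (β - β (P.coroot α) • α) (P.coroot α) • α = β := by
    intro β
    ext z
    simp [P.pairing_self α hα]
    ring
  refine Finset.sum_bij' (fun β _ => β - β (P.coroot α) • α)
    (fun β _ => β - β (P.coroot α) • α) ?_ ?_ ?_ ?_ ?_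
  · exact fun β hβ => P.reflect_mem α hα β hβ
  · exact fun β hβ => P.reflect_mem α hα β hβ
  · exact fun β _ => invol β
  · exact fun β _ => invol β
  · intro β _
    rw [key, key]

theorem CRS.B_coroot {V : Type*} [NormedAddCommGroup V] [InnerProductSpace ℝ V]
    [FiniteDimensional ℝ V] (P : CRS V) (α : V →ₗ[ℝ] ℝ) (hα : α ∈ P.R) (x : V)
    (hx : ∑ β ∈ P.R, β x * β (P.coroot α) = 0) : α x = 0 := by
  have h1 := P.B_inv α hα x (P.coroot α)
  have h2 : ∀ β : V →ₗ[ℝ] ℝ, β (P.refl α x) * β (P.refl α (P.coroot α)) =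
      - (β x * β (P.coroot α)) + α x * (β (P.coroot α) * β (P.coroot α)) := by
    intro β
    simp [CRS.refl, P.pairing_self α hα]
    ring
  rw [Finset.sum_congr rfl (fun β _ => h2 β), Finset.sum_add_distrib,
    Finset.sum_neg_distrib, ← Finset.mul_sum, hx] at h1
  have h3 : α (P.coroot α) * α (P.coroot α) ≤
      ∑ β ∈ P.R, β (P.coroot α) * β (P.coroot α) :=
    Finset.single_le_sum (f := fun β : V →ₗ[ℝ] ℝ => β (P.coroot α) * β (P.coroot α))
      (fun β _ => mul_self_nonneg _) hα
  rw [P.pairing_self α hα] at h3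
  have h4 : ∑ β ∈ P.R, β (P.coroot α) * β (P.coroot α) ≠ 0 := by
    intro h
    rw [h] at h3
    norm_num at h3
  have h5 : α x * ∑ β ∈ P.R, β (P.coroot α) * β (P.coroot α) = 0 := by linarith
  exact (mul_eq_zero.mp h5).resolve_right h4

theorem CRS.eq_zero_of_roots {V : Type*} [NormedAddCommGroup V] [InnerProductSpace ℝ V]
    [FiniteDimensional ℝ V] (P : CRS V)
    (hspan : Submodule.span ℝ ((P.R : Set (V →ₗ[ℝ] ℝ))) = ⊤) (x : V)
    (hx : ∀ α ∈ P.R, α x = 0) : x = 0 := by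
  refine (Module.forall_dual_apply_eq_zero_iff ℝ x).mp ?_
  intro f
  have hf : f ∈ Submodule.span ℝ ((P.R : Set (V →ₗ[ℝ] ℝ))) := by
    rw [hspan]; trivial
  induction hf using Submodule.span_induction with
  | mem g hg => exact hx g hg
  | zero => simp
  | add a b _ _ ha hb => simp only [LinearMap.add_apply]; rw [ha, hb, add_zero]
  | smul c a _ ha => simp only [LinearMap.smul_apply]; rw [ha, smul_zero]

theorem CRS.span_coroots {V : Type*} [NormedAddCommGroup V] [InnerProductSpace ℝ V]
    [FiniteDimensional ℝ V] (P : CRS V)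
    (hspan : Submodule.span ℝ ((P.R : Set (V →ₗ[ℝ] ℝ))) = ⊤) :
    Submodule.span ℝ (P.coroot '' (P.R : Set (V →ₗ[ℝ] ℝ))) = ⊤ := by
  by_contra hne
  obtain ⟨f, hf0, hf⟩ := Submodule.exists_le_ker_of_lt_top _ (lt_top_iff_ne_top.mpr hne)
  let B : V →ₗ[ℝ] (Module.Dual ℝ V) :=
    ∑ β ∈ P.R, LinearMap.smulRight β (β : Module.Dual ℝ V)
  have hB : ∀ x y, B x y = ∑ β ∈ P.R, β x * β y := by
    intro x y
    simp [B, LinearMap.sum_apply]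
  have hinj : Function.Injective B := by
    rw [← LinearMap.ker_eq_bot, LinearMap.ker_eq_bot']
    intro x hx
    refine P.eq_zero_of_roots hspan x fun α hα => P.B_coroot α hα x ?_
    rw [← hB, hx]; rfl
  have hsurj : Function.Surjective B :=
    (LinearMap.injective_iff_surjective_of_finrank_eq_finrank
      (Subspace.dual_finrank_eq (K := ℝ) (V := V)).symm).mp hinj
  obtain ⟨x, rfl⟩ := hsurj f
  apply hf0
  have : x = 0 := by
    refine P.eq_zero_of_roots hspan x fun α hα => P.B_coroot α hα x ?_
    rw [← hB]
    exact hf (Submodule.subset_span ⟨α, hα, rfl⟩)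
  rw [this, map_zero]

/-- If `R` spans `V∗`, the normalizations of nonzero coweights are dense in the unit
sphere of `V`. -/
theorem rational_points_dense_in_sphere
    {V : Type*} [NormedAddCommGroup V] [InnerProductSpace ℝ V]
    [FiniteDimensional ℝ V] (P : CRS V)
    (hspan : Submodule.span ℝ ((P.R : Set (V →ₗ[ℝ] ℝ))) = ⊤) :
    ∀ u : V, ‖u‖ = 1 →
      u ∈ closure {x : V | ∃ ν : V, ν ≠ 0 ∧ P.IsCoweight ν ∧ x = ‖ν‖⁻¹ • ν} := by
  intro u hu
  have hu' : u ∈ Submodule.span ℝ (P.coroot '' (P.R : Set (V →ₗ[ℝ] ℝ))) := by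
    rw [P.span_coroots hspan]; trivial
  obtain ⟨c, hc⟩ := (Submodule.mem_span_image_finset_iff_exists_fun' ℝ).mp hu'
  let ν : ℕ → V := fun n => ∑ α ∈ P.R, ((⌊c α * (n : ℝ)⌋ : ℤ) : ℝ) • P.coroot α
  have hcow : ∀ n, P.IsCoweight (ν n) := by
    intro n α hα
    choose! m hm using fun β hβ => P.crystal α hα β hβ
    refine ⟨∑ β ∈ P.R, ⌊c β * (n : ℝ)⌋ * m β, ?_⟩
    simp only [ν, map_sum, map_smul, smul_eq_mul]
    push_cast
    exact Finset.sum_congr rfl fun β hβ => by rw [hm β hβ]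
  have hlim : Filter.Tendsto (fun n : ℕ => ((n : ℝ)⁻¹) • ν n) Filter.atTop (nhds u) := by
    have h1 : ∀ a : ℝ, Filter.Tendsto (fun n : ℕ => (n : ℝ)⁻¹ * ((⌊a * (n : ℝ)⌋ : ℤ) : ℝ))
        Filter.atTop (nhds a) := by
      intro a
      have hinv : Filter.Tendsto (fun n : ℕ => (n : ℝ)⁻¹) Filter.atTop (nhds 0) :=
        tendsto_inv_atTop_nhds_zero_nat
      have hlow : Filter.Tendsto (fun n : ℕ => a - (n : ℝ)⁻¹) Filter.atTop (nhds a) := by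
        simpa using hinv.const_sub a
      refine tendsto_of_tendsto_of_tendsto_of_le_of_le' hlow tendsto_const_nhds ?_ ?_
      · filter_upwards [Filter.eventually_gt_atTop 0] with n hpos
        have hn' : (0 : ℝ) < n := by exact_mod_cast hpos
        have h2 := (Int.sub_one_lt_floor (a * (n : ℝ))).le
        have h3 := mul_le_mul_of_nonneg_left h2 (inv_nonneg.mpr hn'.le)
        have h4 : (n : ℝ)⁻¹ * (a * n - 1) = a - (n : ℝ)⁻¹ := by field_simp
        linarith
      · filter_upwards [Filter.eventually_gt_atTop 0] with n hpos
        have hn' : (0 : ℝ) < n := by exact_mod_cast hpos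
        have h3 := mul_le_mul_of_nonneg_left (Int.floor_le (a * (n : ℝ)))
          (inv_nonneg.mpr hn'.le)
        have h4 : (n : ℝ)⁻¹ * (a * n) = a := by field_simp
        linarith
    rw [← hc]
    simp only [ν, Finset.smul_sum, smul_smul]
    exact tendsto_finsetSum _ fun α _ => (h1 (c α)).smul_const _
  have hu0 : u ≠ 0 := by
    rintro rfl
    simp at hu
  have hlim2 : Filter.Tendsto (fun n : ℕ => ‖((n : ℝ)⁻¹) • ν n‖⁻¹ • (((n : ℝ)⁻¹) • ν n))
      Filter.atTop (nhds u) := by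
    have := (hlim.norm.inv₀ (norm_ne_zero_iff.mpr hu0)).smul hlim
    simpa [hu] using this
  refine mem_closure_of_tendsto hlim2 ?_
  filter_upwards [hlim.eventually_ne hu0, Filter.eventually_gt_atTop 0] with n hn hpos
  have hn' : (0 : ℝ) < n := by exact_mod_cast hpos
  refine ⟨ν n, fun h => hn (by rw [h, smul_zero]), hcow n, ?_⟩
  rw [norm_smul, norm_inv, Real.norm_of_nonneg hn'.le, smul_smul, mul_inv, inv_inv]
  congr 1
  field_simp
end
end

section
/- Let R be the root system of type A₂ in V = ℝ², with simple roots α, β and fundamental coweights ϖ₁, ϖ₂ determined by α(ϖ₁) = β(ϖ₂) = 1, α(ϖ₂) = β(ϖ₁) = 0. Define p ∈ 𝒫 by p(t) = −t(ϖ₁ + ϖ₂) for t ∈ [0, 1/2] and p(t) = (t − 1)(ϖ₁ + ϖ₂) for t ∈ [1/2, 1]. Then p is a Hecke path of Δ-length ϖ₁ + ϖ₂ with p(1) = 0 ∈ P(R∨), and yet min_{t ∈ [0,1]} α(p(t)) = −1/2 ∉ ℤ; hence there exists a Hecke path p with p(1) ∈ P(R∨) which does not belong to 𝒫_ℤ =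 {p ∈ 𝒫 : min_t α(p(t)) ∈ ℤ for every simple root α}. -/
noncomputable section

theorem a2_zz_left {V : Type*} [AddCommGroup V] [Module ℝ V] (v : V) {t : ℝ} (h : t ≤ 1 / 2) :
    zigzag v t = (-t) • v := by
  unfold zigzag; rw [if_pos h]

theorem a2_zz_right {V : Type*} [AddCommGroup V] [Module ℝ V] (v : V) {t : ℝ} (h : 1 / 2 ≤ t) :
    zigzag v t = (t - 1) • v := by
  unfold zigzag
  split_ifs with h'
  · have : t = 1 / 2 := le_antisymm h' h
    subst this; norm_num
  · rfl

theorem a2_zz_PL {V : Type*} [AddCommGroup V] [Module ℝ V] (v : V) :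
    PLOn (zigzag v) 0 1 2 (fun i => (i : ℝ) / 2) (fun i => if i = 0 then -v else v) := by
  refine ⟨by simp, by simp, ?_, ?_⟩
  · intro i _
    push_cast
    linarith
  · intro i hi
    interval_cases i
    · intro u hu
      simp only [Set.mem_Icc] at hu
      norm_num at hu
      rw [a2_zz_left v (t := u) (by linarith [hu.2]), a2_zz_left v (by norm_num)]
      simp
    · intro u hu
      simp only [Set.mem_Icc] at hu
      norm_num at hu
      rw [a2_zz_right v (t := u) (by linarith [hu.1]), a2_zz_right v (by norm_num)]
      simp only [one_ne_zero, if_false]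
      rw [← add_smul]
      congr 1
      push_cast
      ring

theorem a2_deriv_left {V : Type*} [NormedAddCommGroup V] [NormedSpace ℝ V] (v : V) (t : ℝ)
    (s : Set ℝ) : HasDerivWithinAt (fun x : ℝ => (-x) • v) (-v) s t := by
  have := ((hasDerivAt_id t).neg.smul_const v).hasDerivWithinAt (s := s)
  simpa using this

theorem a2_deriv_right {V : Type*} [NormedAddCommGroup V] [NormedSpace ℝ V] (v : V) (t : ℝ)
    (s : Set ℝ) : HasDerivWithinAt (fun x : ℝ => (x - 1) • v) v s t := by
  have := (((hasDerivAt_id t).sub_const 1).smul_const v).hasDerivWithinAt (s := s)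
  simpa using this

theorem a2_zz_dm {V : Type*} [NormedAddCommGroup V] [NormedSpace ℝ V] (v w : V) (t : ℝ)
    (h : HasDerivWithinAt (zigzag v) w (Set.Iic t) t) :
    w = if t ≤ 1 / 2 then -v else v := by
  refine (uniqueDiffWithinAt_Iic t).eq_deriv _ h ?_
  split_ifs with ht
  · exact (a2_deriv_left v t _).congr (fun x hx => a2_zz_left v (le_trans hx ht))
      (a2_zz_left v ht)
  · push Not at ht
    refine (a2_deriv_right v t _).congr_of_eventuallyEq ?_ (a2_zz_right v ht.le)
    filter_upwards [mem_nhdsWithin_of_mem_nhds (lt_mem_nhds ht)] with x hx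
    exact a2_zz_right v (le_of_lt hx)

theorem a2_zz_dp {V : Type*} [NormedAddCommGroup V] [NormedSpace ℝ V] (v w : V) (t : ℝ)
    (h : HasDerivWithinAt (zigzag v) w (Set.Ici t) t) :
    w = if t < 1 / 2 then -v else v := by
  refine (uniqueDiffWithinAt_Ici t).eq_deriv _ h ?_
  split_ifs with ht
  · refine (a2_deriv_left v t _).congr_of_eventuallyEq ?_ (a2_zz_left v ht.le)
    filter_upwards [mem_nhdsWithin_of_mem_nhds (gt_mem_nhds ht)] with x hx
    exact a2_zz_left v (le_of_lt hx)
  · push Not at ht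
    exact (a2_deriv_right v t _).congr (fun x hx => a2_zz_right v (le_trans ht hx))
      (a2_zz_right v ht)

theorem a2_orbit_refl {V : Type*} [NormedAddCommGroup V] [InnerProductSpace ℝ V]
    [FiniteDimensional ℝ V] (P : CRS V) (v : V) : P.SameOrbit v v :=
  ⟨id, ⟨[], by simp, rfl⟩, rfl⟩

theorem a2_orbit_one {V : Type*} [NormedAddCommGroup V] [InnerProductSpace ℝ V]
    [FiniteDimensional ℝ V] (P : CRS V) (γ : V →ₗ[ℝ] ℝ) (hγ : γ ∈ P.R) (v u : V)
    (h : P.refl γ v = u) : P.SameOrbit v u :=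
  ⟨P.refl γ, ⟨[γ], by simpa using hγ, rfl⟩, h⟩

theorem a2_rho {V : Type*} [NormedAddCommGroup V] [InnerProductSpace ℝ V]
    [FiniteDimensional ℝ V] (hdim : Module.finrank ℝ V = 2)
    (α β : V →ₗ[ℝ] ℝ) (ϖ₁ ϖ₂ x : V)
    (hw11 : α ϖ₁ = 1) (hw12 : β ϖ₁ = 0) (hw21 : α ϖ₂ = 0) (hw22 : β ϖ₂ = 1)
    (h1 : α x = 1) (h2 : β x = 1) : x = ϖ₁ + ϖ₂ := by
  have hsurj : Function.Surjective (α.prod β) := by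
    rintro ⟨a, b⟩
    refine ⟨a • ϖ₁ + b • ϖ₂, ?_⟩
    simp [hw11, hw12, hw21, hw22]
  have hinj : Function.Injective (α.prod β) :=
    (LinearMap.injective_iff_surjective_of_finrank_eq_finrank (by simp [hdim])).2 hsurj
  apply hinj
  simp [hw11, hw12, hw21, hw22, h1, h2]

/-- For the root system of type `A₂`, the path going from the origin to
`−(ϖ₁+ϖ₂)/2` and back to the origin is a Hecke path of Δ-length `ϖ₁+ϖ₂` with endpoint
in `P(R∨)`, yet `min_t α(p(t)) = −1/2 ∉ ℤ`; hence there is a Hecke path with endpoint a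
coweight which does not lie in `𝒫_ℤ`. -/
theorem hecke_path_not_integral_A2
    {V : Type*} [NormedAddCommGroup V] [InnerProductSpace ℝ V]
    [FiniteDimensional ℝ V] (P : CRS V)
    (hdim : Module.finrank ℝ V = 2)
    (α β : V →ₗ[ℝ] ℝ) (ϖ₁ ϖ₂ : V)
    (hR : (P.R : Set (V →ₗ[ℝ] ℝ)) = {α, β, α + β, -α, -β, -(α + β)})
    (hRpos : (P.Rpos : Set (V →ₗ[ℝ] ℝ)) = {α, β, α + β})
    (hsimple : (P.simple : Set (V →ₗ[ℝ] ℝ)) = {α, β})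
    (hαβ : α (P.coroot β) = -1) (hβα : β (P.coroot α) = -1)
    (hco : P.coroot (α + β) = P.coroot α + P.coroot β)
    (hw11 : α ϖ₁ = 1) (hw12 : β ϖ₁ = 0) (hw21 : α ϖ₂ = 0) (hw22 : β ϖ₂ = 1) :
    P.IsHeckePath (zigzag (ϖ₁ + ϖ₂)) ∧
    P.DeltaLenOn (zigzag (ϖ₁ + ϖ₂)) 0 1 (ϖ₁ + ϖ₂) ∧
    zigzag (ϖ₁ + ϖ₂) 1 = 0 ∧
    P.IsCoweight (zigzag (ϖ₁ + ϖ₂) 1) ∧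
    IsLeast {y : ℝ | ∃ t ∈ Set.Icc (0 : ℝ) 1, y = α (zigzag (ϖ₁ + ϖ₂) t)}
      (-(1 / 2)) ∧
    (¬ ∃ n : ℤ, ((-(1 / 2) : ℝ) = (n : ℝ))) ∧
    (∃ q : ℝ → V, q 0 = 0 ∧ P.IsHeckePath q ∧ P.IsCoweight (q 1) ∧
      ¬ (∀ γ ∈ P.simple, ∃ n : ℤ,
          IsLeast {y : ℝ | ∃ t ∈ Set.Icc (0 : ℝ) 1, y = γ (q t)} (n : ℝ))) := by
  set ρ : V := ϖ₁ + ϖ₂ with hρ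
  have memR : ∀ γ, γ ∈ P.R ↔ γ ∈ ({α, β, α + β, -α, -β, -(α + β)} : Set (V →ₗ[ℝ] ℝ)) := by
    intro γ; rw [← hR]; simp
  have memP : ∀ γ, γ ∈ P.Rpos ↔ γ ∈ ({α, β, α + β} : Set (V →ₗ[ℝ] ℝ)) := by
    intro γ; rw [← hRpos]; simp
  have memS : α ∈ P.simple := by
    have : α ∈ (P.simple : Set (V →ₗ[ℝ] ℝ)) := by rw [hsimple]; simp
    simpa using this
  have hαR : α ∈ P.R := (memR α).2 (by simp)
  have hβR : β ∈ P.R := (memR β).2 (by simp)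
  have hsR : α + β ∈ P.R := (memR _).2 (by simp)
  have hsP : α + β ∈ P.Rpos := (memP _).2 (by simp)
  have hαρ : α ρ = 1 := by simp [hρ, hw11, hw21]
  have hβρ : β ρ = 1 := by simp [hρ, hw12, hw22]
  have hρ0 : ρ ≠ 0 := by
    intro h; rw [h] at hαρ; simp at hαρ
  have hcor : P.coroot (α + β) = ρ := by
    refine a2_rho hdim α β ϖ₁ ϖ₂ _ hw11 hw12 hw21 hw22 ?_ ?_
    · rw [hco, map_add, P.pairing_self α hαR, hαβ]; norm_num
    · rw [hco, map_add, P.pairing_self β hβR, hβα]; norm_num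
  have hr1 : P.refl (α + β) (-ρ) = ρ := by
    have : (α + β) (-ρ) = -2 := by
      simp [hαρ, hβρ]; norm_num
    simp only [CRS.refl, hcor, this]
    module
  have hr2 : P.refl (α + β) ρ = -ρ := by
    have : (α + β) ρ = 2 := by
      simp [hαρ, hβρ]; norm_num
    simp only [CRS.refl, hcor, this]
    module
  have hcham : ρ ∈ P.chamber := by
    intro γ hγ
    rcases (memP γ).1 hγ with rfl | rfl | rfl
    · rw [hαρ]; norm_num
    · rw [hβρ]; norm_num
    · simp [hαρ, hβρ]
  have hHecke : P.IsHeckePath (zigzag ρ) := by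
    refine ⟨⟨2, _, _, by norm_num, a2_zz_PL ρ, ?_⟩, ?_⟩
    · intro i j _ _
      split_ifs
      · exact a2_orbit_refl P _
      · exact a2_orbit_one P _ hsR _ _ hr1
      · exact a2_orbit_one P _ hsR _ _ hr2
      · exact a2_orbit_refl P _
    · intro t _ vm vp hm hp
      have em := a2_zz_dm ρ vm t hm
      have ep := a2_zz_dp ρ vp t hp
      have triv : ∀ w : V, w ≠ 0 → P.ChainGEAt (zigzag ρ t) w w := fun w hw =>
        ⟨0, fun _ => w, fun _ => α, ⟨fun _ _ => hw, fun i hi => absurd hi (Nat.not_lt_zero i)⟩,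
          rfl, rfl⟩
      rcases lt_trichotomy t (1 / 2) with h | h | h
      · rw [if_pos h.le] at em
        rw [if_pos h] at ep
        rw [em, ep]
        exact triv _ (neg_ne_zero.2 hρ0)
      · rw [if_pos h.le] at em
        rw [if_neg h.not_lt] at ep
        rw [em, ep]
        refine ⟨1, fun i => if i = 0 then -ρ else ρ, fun _ => α + β, ⟨?_, ?_⟩, by simp, by simp⟩
        · intro i _
          dsimp only
          split_ifs
          · exact neg_ne_zero.2 hρ0
          · exact hρ0
        · intro i hi
          obtain rfl : i = 0 := by omega
          refine ⟨hsP, ⟨-1, ?_⟩, ?_, ?_⟩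
          · rw [a2_zz_left ρ h.le, h]
            simp [hαρ, hβρ]; norm_num
          · simp [hr1]
          · simp [hαρ, hβρ]
      · rw [if_neg h.not_ge] at em
        rw [if_neg h.not_gt] at ep
        rw [em, ep]
        exact triv _ hρ0
  have hend : zigzag ρ 1 = 0 := by
    rw [a2_zz_right ρ (by norm_num)]; simp
  have hcow : P.IsCoweight (zigzag ρ 1) := by
    intro γ _
    exact ⟨0, by rw [hend]; simp⟩
  have hleast : IsLeast {y : ℝ | ∃ t ∈ Set.Icc (0 : ℝ) 1, y = α (zigzag ρ t)} (-(1 / 2)) := by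
    constructor
    · refine ⟨1 / 2, by constructor <;> norm_num, ?_⟩
      rw [a2_zz_left ρ le_rfl, map_smul, hαρ]; norm_num
    · rintro y ⟨t, _, rfl⟩
      rcases le_total t (1 / 2) with h | h
      · rw [a2_zz_left ρ h, map_smul, hαρ, smul_eq_mul]; linarith
      · rw [a2_zz_right ρ h, map_smul, hαρ, smul_eq_mul]; linarith
  have hnot : ¬ ∃ n : ℤ, ((-(1 / 2) : ℝ) = (n : ℝ)) := by
    rintro ⟨n, hn⟩
    have h2 : (2 * n : ℝ) = -1 := by linarith
    have h3 : 2 * n = -1 := by exact_mod_cast h2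
    omega
  refine ⟨hHecke, ?_, hend, hcow, hleast, hnot, zigzag ρ, ?_, hHecke, hcow, ?_⟩
  · refine ⟨2, _, _, fun _ => ρ, by norm_num, a2_zz_PL ρ, ?_, ?_⟩
    · intro i _
      refine ⟨hcham, ?_⟩
      dsimp only
      split_ifs
      · exact a2_orbit_one P _ hsR _ _ hr1
      · exact a2_orbit_refl P _
    · simp only [Finset.sum_range_succ, Finset.sum_range_zero]
      push_cast
      module
  · rw [a2_zz_left ρ (by norm_num)]; simp
  · intro h
    obtain ⟨n, hn⟩ := h α memS
    exact hnot ⟨n, hleast.unique hn⟩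
end
end
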